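/- Let 0 < Y < 2, B > 0, A ∈ ℝ, and define for y > 0 the function ν₁(y) = (B/√(2π)) · e^{-(B²−A²)y/2} · y^{−(Y+1)/2} · ∫_0^∞ e^{−B²yh/2} h^{(Y−1)/2} (1+h)^{−Y/2} dh. Then for every real x ≠ 0, ∫_0^∞ ν₁(y) · (2πy)^{−1/2} e^{−(x−Ay)²/(2y)} dy = (2^{Y/2} Γ((Y+1)/2)/√π) · e^{Ax − B|x|} · |x|^{−(1+Y)}. (That is, the CGMY Lévy density is the Gaussian mixture, with drift A, of the explicit subordinator Lévy density ν₁, which is absolutely continuous with respect to the Lévy density of the one-sided stable Y/2 subordinator.) -/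

import Mathlib

open MeasureTheory Real Set

/-!
Write `s = (Y + 1) / 2`, `a = B² / 2` and `b = x² / 2`. Completing the square absorbs the drift and
the exponential tilt of `ν₁` into `e^{Ax}`, which leaves the integral of
`y^{-(s + 1/2)} h^{s - 1} (1 + h)^{1/2 - s} e^{-a (1 + h) y - b / y}` over the quadrant. In the
variables `u = (1 + h) y` and `h` the identity `b / y = b / u + b h / u` makes the integral over
`h` a Gamma integral. What is left, `∫ u^{-1/2} e^{-(a u + b / u)} du`, becomes a Gaussian integral
under the Cauchy–Schlömilch substitution `v = t - c / t` with `t = √u`.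
-/

section CauchySchlomilch

variable {E : Type*} [NormedAddCommGroup E] [NormedSpace ℝ E] {c : ℝ}

theorem hasDerivAt_const_div (c : ℝ) {t : ℝ} (ht : t ≠ 0) :
    HasDerivAt (fun t => c / t) (-(c / t ^ 2)) t := by
  simpa [div_eq_mul_inv] using (hasDerivAt_inv ht).const_mul c

theorem hasDerivAt_sub_const_div (c : ℝ) {t : ℝ} (ht : t ≠ 0) :
    HasDerivAt (fun t => t - c / t) (1 + c / t ^ 2) t := by
  simpa using (hasDerivAt_id' t).fun_sub (hasDerivAt_const_div c ht)

theorem monotoneOn_sub_const_div_Ioi (hc : 0 ≤ c) : MonotoneOn (fun t => t - c / t) (Ioi 0) :=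
  fun _ ht _ _ htu => sub_le_sub htu (div_le_div_of_nonneg_left hc ht htu)

theorem image_sub_const_div_Ioi (hc : 0 < c) : (fun t => t - c / t) '' Ioi 0 = univ := by
  refine eq_univ_of_forall fun v => ?_
  have habs : |v| < √(v ^ 2 + 4 * c) := by
    rw [← sqrt_sq_eq_abs]
    exact sqrt_lt_sqrt (sq_nonneg v) (by linarith)
  have hpos : 0 < v + √(v ^ 2 + 4 * c) := by linarith [neg_abs_le v]
  have hroot : √(v ^ 2 + 4 * c) ^ 2 = v ^ 2 + 4 * c := sq_sqrt (by positivity)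
  refine ⟨(v + √(v ^ 2 + 4 * c)) / 2, half_pos hpos, ?_⟩
  field_simp
  linear_combination hroot

theorem integrableOn_one_add_div_sq_smul_comp_sub_const_div (hc : 0 < c) {f : ℝ → E}
    (hf : Integrable f) :
    IntegrableOn (fun t => (1 + c / t ^ 2) • f (t - c / t)) (Ioi 0) := by
  refine (integrableOn_image_iff_integrableOn_deriv_smul_of_monotoneOn measurableSet_Ioi
    (fun t ht => (hasDerivAt_sub_const_div c (ne_of_gt ht)).hasDerivWithinAt)
    (monotoneOn_sub_const_div_Ioi hc.le) f).1 ?_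
  rwa [image_sub_const_div_Ioi hc, integrableOn_univ]

theorem integral_one_add_div_sq_smul_comp_sub_const_div (hc : 0 < c) (f : ℝ → E) :
    ∫ t in Ioi 0, (1 + c / t ^ 2) • f (t - c / t) = ∫ v, f v := by
  rw [← integral_image_eq_integral_deriv_smul_of_monotoneOn measurableSet_Ioi
    (fun t ht => (hasDerivAt_sub_const_div c (ne_of_gt ht)).hasDerivWithinAt)
    (monotoneOn_sub_const_div_Ioi hc.le) f, image_sub_const_div_Ioi hc, setIntegral_univ]

theorem integrableOn_comp_sub_const_div (hc : 0 < c) {f : ℝ → E} (hf : Integrable f) :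
    IntegrableOn (fun t => f (t - c / t)) (Ioi 0) := by
  have hweight : ∀ t : ℝ, 1 ≤ 1 + c / t ^ 2 := fun t => le_add_of_nonneg_right (by positivity)
  refine ((integrableOn_one_add_div_sq_smul_comp_sub_const_div hc hf).bdd_smul
    (φ := fun t : ℝ => (1 + c / t ^ 2)⁻¹) 1 (by fun_prop : Measurable _).aestronglyMeasurable
    (ae_of_all _ fun t => ?_)).congr
    (ae_of_all _ fun t => inv_smul_smul₀ (zero_lt_one.trans_le (hweight t)).ne' _)
  rw [norm_inv, norm_of_nonneg (zero_le_one.trans (hweight t))]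
  exact inv_le_one_of_one_le₀ (hweight t)

theorem integral_const_div_sq_smul_comp_const_div_Ioi (hc : 0 < c) (g : ℝ → E) :
    ∫ t in Ioi 0, (c / t ^ 2) • g (c / t) = ∫ t in Ioi 0, g t := by
  have himage : (fun t => c / t) '' Ioi 0 = Ioi 0 :=
    Subset.antisymm (image_subset_iff.2 fun _ ht => div_pos hc ht)
      fun t ht => ⟨c / t, div_pos hc ht, div_div_cancel₀ hc.ne'⟩
  have hanti : AntitoneOn (fun t => c / t) (Ioi 0) :=
    fun _ ht _ _ htu => div_le_div_of_nonneg_left hc.le ht htu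
  have h := integral_image_eq_integral_deriv_smul_of_antitoneOn measurableSet_Ioi
    (fun t ht => (hasDerivAt_const_div c (ne_of_gt ht)).hasDerivWithinAt) hanti g
  simpa only [himage, neg_neg] using h.symm

/- The inversion `t ↦ c / t` changes the sign of `t - c / t`, so for even `f` the two summands of
the weight `1 + c / t ^ 2` contribute equally. -/
theorem two_smul_integral_comp_sub_const_div (hc : 0 < c) {f : ℝ → E} (hf : Integrable f)
    (heven : f.Even) :
    (2 : ℝ) • ∫ t in Ioi 0, f (t - c / t) = ∫ v, f v := by
  have hint := integrableOn_comp_sub_const_div hc hf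
  have hint' : IntegrableOn (fun t => (c / t ^ 2) • f (t - c / t)) (Ioi 0) :=
    ((integrableOn_one_add_div_sq_smul_comp_sub_const_div hc hf).sub hint).congr
      (ae_of_all _ fun t => by simp [add_smul])
  have hflip : ∫ t in Ioi 0, (c / t ^ 2) • f (t - c / t) = ∫ t in Ioi 0, f (t - c / t) := by
    rw [← integral_const_div_sq_smul_comp_const_div_Ioi hc fun t => f (t - c / t)]
    simp_rw [div_div_cancel₀ hc.ne', ← heven (_ - c / _), neg_sub]
  rw [← integral_one_add_div_sq_smul_comp_sub_const_div hc f]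
  simp_rw [add_smul, one_smul]
  rw [integral_add hint hint', hflip, two_smul]

end CauchySchlomilch

theorem integral_exp_neg_mul_sq_add_div_sq_Ioi {a b : ℝ} (ha : 0 < a) (hb : 0 < b) :
    ∫ t in Ioi 0, exp (-(a * t ^ 2 + b / t ^ 2)) = √(π / a) / 2 * exp (-(2 * √(a * b))) := by
  set c := √(b / a) with hc
  have hc_pos : 0 < c := sqrt_pos.2 (div_pos hb ha)
  have hac_sq : a * c ^ 2 = b := by rw [hc, sq_sqrt (by positivity), mul_div_cancel₀ _ ha.ne']
  have hac : √(a * b) = a * c := by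
    rw [← hac_sq, ← mul_assoc, ← sq, ← mul_pow, sqrt_sq (by positivity)]
  have hsquare : ∀ t ∈ Ioi (0 : ℝ), exp (-(a * t ^ 2 + b / t ^ 2)) =
      exp (-a * (t - c / t) ^ 2) * exp (-(2 * √(a * b))) := fun t (ht : 0 < t) => by
    rw [← exp_add, hac, ← hac_sq]
    congr 1
    field_simp
    ring
  have hgauss := two_smul_integral_comp_sub_const_div hc_pos (integrable_exp_neg_mul_sq ha)
    fun v => by rw [neg_sq]
  rw [integral_gaussian, smul_eq_mul] at hgauss
  rw [setIntegral_congr_fun measurableSet_Ioi hsquare, integral_mul_const]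
  linear_combination exp (-(2 * √(a * b))) / 2 * hgauss

theorem integral_rpow_neg_half_mul_exp_neg_mul_add_div_Ioi {a b : ℝ} (ha : 0 < a) (hb : 0 < b) :
    ∫ u in Ioi 0, u ^ (-(1 / 2) : ℝ) * exp (-(a * u + b / u)) =
      √(π / a) * exp (-(2 * √(a * b))) := by
  have hsubst : ∀ t ∈ Ioi (0 : ℝ), (2 * t ^ (2 - 1 : ℝ)) •
      ((t ^ (2 : ℝ)) ^ (-(1 / 2) : ℝ) * exp (-(a * t ^ (2 : ℝ) + b / t ^ (2 : ℝ)))) =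
      2 * exp (-(a * t ^ 2 + b / t ^ 2)) := fun t (ht : 0 < t) => by
    have hjacobian : t ^ (2 - 1 : ℝ) * t ^ (2 * -(1 / 2) : ℝ) = 1 := by
      rw [← rpow_add ht]
      norm_num
    rw [← rpow_mul ht.le, rpow_two, smul_eq_mul]
    linear_combination 2 * exp (-(a * t ^ 2 + b / t ^ 2)) * hjacobian
  rw [← integral_comp_rpow_Ioi_of_pos two_pos, setIntegral_congr_fun measurableSet_Ioi hsubst,
    integral_const_mul, integral_exp_neg_mul_sq_add_div_sq_Ioi ha hb]
  ring

section FibrewiseScaling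

variable {α E : Type*} [MeasurableSpace α] {μ : Measure α} [SFinite μ]
  [NormedAddCommGroup E] [NormedSpace ℝ E]

theorem integral_Ioi_smul_comp_mul_left {r : ℝ} (hr : 0 < r) (g : ℝ → E) :
    ∫ y in Ioi 0, r • g (r * y) = ∫ u in Ioi 0, g u := by
  rw [integral_smul, integral_comp_mul_left_Ioi' g 0 hr, mul_zero]

theorem integral_integral_smul_comp_mul_left {r : α → ℝ} (hr : Measurable r)
    (hr_pos : ∀ᵐ h ∂μ, 0 < r h) {K : ℝ → α → E} (hK : StronglyMeasurable (Function.uncurry K))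
    (hK_int : Integrable (Function.uncurry K) ((volume.restrict (Ioi 0)).prod μ)) :
    ∫ y in Ioi 0, ∫ h, r h • K (r h * y) h ∂μ = ∫ u in Ioi 0, ∫ h, K u h ∂μ := by
  have hscaled : StronglyMeasurable fun z : ℝ × α => r z.2 • K (r z.2 * z.1) z.2 :=
    (hr.comp measurable_snd).stronglyMeasurable.smul (hK.comp_measurable
      (g := fun z : ℝ × α => (r z.2 * z.1, z.2)) (by fun_prop))
  have hfibre := (integrable_prod_iff' hK_int.aestronglyMeasurable).1 hK_int
  have hscaled_int : Integrable (Function.uncurry fun y h => r h • K (r h * y) h)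
      ((volume.restrict (Ioi 0)).prod μ) := by
    refine (integrable_prod_iff' hscaled.aestronglyMeasurable).2 ⟨?_, hfibre.2.congr ?_⟩
    · filter_upwards [hfibre.1, hr_pos] with h hint hrh
      refine Integrable.smul (r h) ((integrableOn_Ioi_comp_mul_left_iff (K · h) 0 hrh).2 ?_)
      rwa [mul_zero]
    · filter_upwards [hr_pos] with h hrh
      simpa only [Function.uncurry_apply_pair, norm_smul, norm_of_nonneg hrh.le, smul_eq_mul] using
        (integral_Ioi_smul_comp_mul_left hrh fun u => ‖K u h‖).symm
  rw [integral_integral_swap hscaled_int, integral_integral_swap hK_int]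
  refine integral_congr_ae ?_
  filter_upwards [hr_pos] with h hrh
  exact integral_Ioi_smul_comp_mul_left hrh fun u => K u h

end FibrewiseScaling

section GammaMixture

variable {E : Type*} [NormedAddCommGroup E] [NormedSpace ℝ E] {s a b : ℝ}

theorem integral_rpow_mul_exp_neg_div_mul_Ioi (hs : 0 < s) (hb : 0 < b) {u : ℝ} (hu : 0 < u) :
    ∫ h in Ioi 0, h ^ (s - 1) * exp (-(b / u * h)) = Gamma s * b ^ (-s) * u ^ s := by
  rw [integral_rpow_mul_exp_neg_mul_Ioi hs (div_pos hb hu), one_div_div, div_rpow hu.le hb.le,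
    rpow_neg hb.le]
  ring

theorem integrableOn_rpow_mul_exp_neg_mul_Ioi {r : ℝ} (hs : 0 < s) (hr : 0 < r) :
    IntegrableOn (fun h => h ^ (s - 1) * exp (-(r * h))) (Ioi 0) := by
  simpa using integrableOn_rpow_mul_exp_neg_mul_rpow (s := s - 1) (by linarith) one_pos hr

theorem stronglyMeasurable_rpow_mul_exp_neg_div_mul_smul (s b : ℝ) {φ : ℝ → E}
    (hφ : StronglyMeasurable φ) :
    StronglyMeasurable (Function.uncurry fun u h => (h ^ (s - 1) * exp (-(b / u * h))) • φ u) :=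
  (by fun_prop : Measurable fun z : ℝ × ℝ => z.2 ^ (s - 1) * exp (-(b / z.1 * z.2)))
    |>.stronglyMeasurable.smul (hφ.comp_measurable measurable_fst)

theorem integrable_rpow_mul_exp_neg_div_mul_smul (hs : 0 < s) (hb : 0 < b) {φ : ℝ → E}
    (hφ : StronglyMeasurable φ) (hφ_int : IntegrableOn (fun u => u ^ s • φ u) (Ioi 0)) :
    Integrable (Function.uncurry fun u h => (h ^ (s - 1) * exp (-(b / u * h))) • φ u)
      ((volume.restrict (Ioi 0)).prod (volume.restrict (Ioi 0))) := by
  have hmeas := stronglyMeasurable_rpow_mul_exp_neg_div_mul_smul s b hφ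
  refine (integrable_prod_iff hmeas.aestronglyMeasurable).2 ⟨?_, ?_⟩
  · filter_upwards [self_mem_ae_restrict measurableSet_Ioi] with u hu
    exact (integrableOn_rpow_mul_exp_neg_mul_Ioi hs (div_pos hb hu)).smul_const (φ u)
  · refine (hφ_int.norm.const_mul (Gamma s * b ^ (-s))).congr ?_
    filter_upwards [self_mem_ae_restrict measurableSet_Ioi] with u (hu : 0 < u)
    have hnorm : ∀ h ∈ Ioi (0 : ℝ), ‖(h ^ (s - 1) * exp (-(b / u * h))) • φ u‖ =
        h ^ (s - 1) * exp (-(b / u * h)) * ‖φ u‖ := fun h (hh : 0 < h) => by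
      rw [norm_smul, norm_of_nonneg (by positivity)]
    rw [norm_smul, norm_of_nonneg (rpow_nonneg hu.le s), ← mul_assoc,
      ← integral_rpow_mul_exp_neg_div_mul_Ioi hs hb hu, ← integral_mul_const]
    exact (setIntegral_congr_fun measurableSet_Ioi hnorm).symm

theorem integral_integral_smul_comp_one_add_mul [CompleteSpace E] (hs : 0 < s) (hb : 0 < b)
    {φ : ℝ → E} (hφ : StronglyMeasurable φ)
    (hφ_int : IntegrableOn (fun u => u ^ s • φ u) (Ioi 0)) :
    ∫ y in Ioi 0, ∫ h in Ioi 0,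
        (1 + h) • (h ^ (s - 1) * exp (-(b / ((1 + h) * y) * h))) • φ ((1 + h) * y) =
      (Gamma s * b ^ (-s)) • ∫ u in Ioi 0, u ^ s • φ u := by
  rw [integral_integral_smul_comp_mul_left
    (K := fun u h => (h ^ (s - 1) * exp (-(b / u * h))) • φ u)
    (measurable_const_add 1)
    (ae_restrict_of_forall_mem measurableSet_Ioi fun h hh => add_pos one_pos hh)
    (stronglyMeasurable_rpow_mul_exp_neg_div_mul_smul s b hφ)
    (integrable_rpow_mul_exp_neg_div_mul_smul hs hb hφ hφ_int), ← integral_smul]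
  refine setIntegral_congr_fun measurableSet_Ioi fun u hu => ?_
  rw [integral_smul_const, integral_rpow_mul_exp_neg_div_mul_Ioi hs hb hu, mul_smul]

theorem rpow_mul_exp_mul_rpow_eq_comp_one_add_mul (s a b : ℝ) {y h : ℝ} (hy : 0 < y) (hh : 0 < h) :
    y ^ (-(s + 1 / 2)) * exp (-(a * y + b / y)) *
        (exp (-(a * y * h)) * h ^ (s - 1) * (1 + h) ^ (1 / 2 - s)) =
      (1 + h) * (h ^ (s - 1) * exp (-(b / ((1 + h) * y) * h)) *
        (((1 + h) * y) ^ (-(s + 1 / 2)) *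
          exp (-(a * ((1 + h) * y) + b / ((1 + h) * y))))) := by
  have hh1 : 0 < 1 + h := by positivity
  have hexp : exp (-(a * y + b / y)) * exp (-(a * y * h)) =
      exp (-(b / ((1 + h) * y) * h)) * exp (-(a * ((1 + h) * y) + b / ((1 + h) * y))) := by
    rw [← exp_add, ← exp_add]
    congr 1
    field_simp
    ring
  have hpow : (1 + h) ^ (1 / 2 - s) = (1 + h) * (1 + h) ^ (-(s + 1 / 2)) := by
    rw [show 1 / 2 - s = 1 + -(s + 1 / 2) by ring, rpow_add hh1, rpow_one]
  rw [mul_rpow hh1.le hy.le, hpow]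
  linear_combination y ^ (-(s + 1 / 2)) * h ^ (s - 1) * (1 + h) * (1 + h) ^ (-(s + 1 / 2)) * hexp

theorem integral_rpow_mul_exp_mul_integral_exp_mul_rpow (hs : 0 < s) (ha : 0 < a) (hb : 0 < b) :
    ∫ y in Ioi 0, y ^ (-(s + 1 / 2)) * exp (-(a * y + b / y)) *
        ∫ h in Ioi 0, exp (-(a * y * h)) * h ^ (s - 1) * (1 + h) ^ (1 / 2 - s) =
      Gamma s * b ^ (-s) * (√(π / a) * exp (-(2 * √(a * b)))) := by
  set φ : ℝ → ℝ := fun u => u ^ (-(s + 1 / 2)) * exp (-(a * u + b / u)) with hφ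
  have hmarginal : ∀ u ∈ Ioi (0 : ℝ),
      u ^ (-(1 / 2) : ℝ) * exp (-(a * u + b / u)) = u ^ s • φ u := fun u (hu : 0 < u) => by
    rw [hφ, smul_eq_mul, ← mul_assoc, ← rpow_add hu]
    ring_nf
  have hvalue := integral_rpow_neg_half_mul_exp_neg_mul_add_div_Ioi ha hb
  have hφ_int : IntegrableOn (fun u => u ^ s • φ u) (Ioi 0) := by
    refine IntegrableOn.congr_fun (.of_integral_ne_zero ?_) hmarginal measurableSet_Ioi
    rw [hvalue]
    positivity
  rw [← hvalue, setIntegral_congr_fun measurableSet_Ioi hmarginal,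
    ← smul_eq_mul (Gamma s * b ^ (-s)),
    ← integral_integral_smul_comp_one_add_mul hs hb (by fun_prop) hφ_int]
  refine setIntegral_congr_fun measurableSet_Ioi fun y hy => ?_
  rw [← integral_const_mul]
  exact setIntegral_congr_fun measurableSet_Ioi fun h hh =>
    rpow_mul_exp_mul_rpow_eq_comp_one_add_mul s a b hy hh

end GammaMixture

/-- The density `ν₁`: the Lévy density of the subordinator for which Brownian motion with drift `A`,
run at the subordinated time, has the CGMY Lévy density with `G = B + A` and `M = B - A`. -/
noncomputable def cgmySubordinatorDensity (Y B A y : ℝ) : ℝ :=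
  (B / √(2 * π)) * exp (-((B ^ 2 - A ^ 2) * y / 2)) * y ^ (-((Y + 1) / 2)) *
    ∫ h in Ioi 0, exp (-(B ^ 2 * y * h / 2)) * h ^ ((Y - 1) / 2) * (1 + h) ^ (-(Y / 2))

theorem cgmySubordinatorDensity_mul_gaussian (Y B A x : ℝ) {y : ℝ} (hy : 0 < y) :
    cgmySubordinatorDensity Y B A y *
        ((2 * π * y) ^ (-(1 / 2) : ℝ) * exp (-(x - A * y) ^ 2 / (2 * y))) =
      B / (2 * π) * exp (A * x) *
        (y ^ (-((Y + 1) / 2 + 1 / 2)) * exp (-(B ^ 2 / 2 * y + x ^ 2 / 2 / y)) *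
          ∫ h in Ioi 0, exp (-(B ^ 2 / 2 * y * h)) * h ^ ((Y + 1) / 2 - 1) *
            (1 + h) ^ (1 / 2 - (Y + 1) / 2)) := by
  have h2π : 0 < 2 * π := by positivity
  have hexp : exp (-((B ^ 2 - A ^ 2) * y / 2)) * exp (-(x - A * y) ^ 2 / (2 * y)) =
      exp (A * x) * exp (-(B ^ 2 / 2 * y + x ^ 2 / 2 / y)) := by
    rw [← exp_add, ← exp_add]
    congr 1
    field_simp
    ring
  have hpow : y ^ (-((Y + 1) / 2)) * y ^ (-(1 / 2) : ℝ) = y ^ (-((Y + 1) / 2 + 1 / 2)) := by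
    rw [← rpow_add hy]
    ring_nf
  have hconst : (2 * π) ^ (-(1 / 2) : ℝ) / √(2 * π) = 1 / (2 * π) := by
    rw [rpow_neg h2π.le, ← sqrt_eq_rpow, div_eq_mul_inv, ← mul_inv, mul_self_sqrt h2π.le, one_div]
  have hs : (Y - 1) / 2 = (Y + 1) / 2 - 1 := by ring
  have hs' : -(Y / 2) = 1 / 2 - (Y + 1) / 2 := by ring
  have hBy : ∀ h, B ^ 2 * y * h / 2 = B ^ 2 / 2 * y * h := fun h => by ring
  simp only [cgmySubordinatorDensity, hs, hs', hBy]
  rw [mul_rpow h2π.le hy.le, ← hpow]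
  generalize ∫ h in Ioi 0, exp (-(B ^ 2 / 2 * y * h)) * h ^ ((Y + 1) / 2 - 1) *
    (1 + h) ^ (1 / 2 - (Y + 1) / 2) = I
  calc
    _ = B * ((2 * π) ^ (-(1 / 2) : ℝ) / √(2 * π)) *
        (exp (-((B ^ 2 - A ^ 2) * y / 2)) * exp (-(x - A * y) ^ 2 / (2 * y))) *
        (y ^ (-((Y + 1) / 2)) * y ^ (-(1 / 2) : ℝ)) * I := by ring
    _ = _ := by rw [hconst, hexp]; ring

theorem gaussian_mixture_value_eq_cgmy_density (Y A : ℝ) {B x : ℝ} (hB : 0 < B) (hx : x ≠ 0) :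
    B / (2 * π) * exp (A * x) * (Gamma ((Y + 1) / 2) * (x ^ 2 / 2) ^ (-((Y + 1) / 2)) *
        (√(π / (B ^ 2 / 2)) * exp (-(2 * √(B ^ 2 / 2 * (x ^ 2 / 2)))))) =
      2 ^ (Y / 2) * Gamma ((Y + 1) / 2) / √π * exp (A * x - B * |x|) * |x| ^ (-(1 + Y)) := by
  have hx_pos : 0 < |x| := abs_pos.2 hx
  have hexp : exp (A * x) * exp (-(2 * √(B ^ 2 / 2 * (x ^ 2 / 2)))) = exp (A * x - B * |x|) := by
    have : B ^ 2 / 2 * (x ^ 2 / 2) = (B * |x| / 2) ^ 2 := by rw [← sq_abs x]; ring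
    rw [← exp_add, this, sqrt_sq (by positivity)]
    ring_nf
  have hpow : (x ^ 2 / 2) ^ (-((Y + 1) / 2)) = 2 ^ (Y / 2) * √2 * |x| ^ (-(1 + Y)) := by
    rw [← sq_abs, div_rpow (by positivity) zero_le_two, ← rpow_natCast, ← rpow_mul hx_pos.le,
      div_eq_mul_inv, ← rpow_neg zero_le_two, sqrt_eq_rpow, ← rpow_add two_pos, mul_comm]
    push_cast
    ring_nf
  have hsqrt : √(π / (B ^ 2 / 2)) = √2 * √π / B := by
    rw [div_div_eq_mul_div, sqrt_div' _ (by positivity), sqrt_sq hB.le, sqrt_mul pi_pos.le,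
      mul_comm]
  rw [hpow, hsqrt, ← hexp]
  have hsq2 : √2 ^ 2 = (2 : ℝ) := sq_sqrt zero_le_two
  have hsqπ : √π ^ 2 = π := sq_sqrt pi_pos.le
  field_simp
  rw [hsq2, hsqπ]
  ring

theorem cgmy_levy_density_as_gaussian_mixture_general {Y B : ℝ} (hY : -1 < Y) (hB : 0 < B) (A : ℝ)
    {x : ℝ} (hx : x ≠ 0) :
    ∫ y in Ioi 0, cgmySubordinatorDensity Y B A y *
        ((2 * π * y) ^ (-(1 / 2) : ℝ) * exp (-(x - A * y) ^ 2 / (2 * y))) =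
      2 ^ (Y / 2) * Gamma ((Y + 1) / 2) / √π * exp (A * x - B * |x|) * |x| ^ (-(1 + Y)) := by
  rw [setIntegral_congr_fun measurableSet_Ioi fun y hy =>
      cgmySubordinatorDensity_mul_gaussian Y B A x hy, integral_const_mul,
    integral_rpow_mul_exp_mul_integral_exp_mul_rpow (by linarith) (by positivity) (by positivity),
    gaussian_mixture_value_eq_cgmy_density Y A hB hx]

/-- The CGMY Lévy density (with `C = 2^(Y/2) Γ((Y+1)/2)/√π`, `G = B + A`, `M = B - A`)
is the Gaussian mixture, with drift `A`, of the explicit subordinator Lévy density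
`ν₁(y) = (B/√(2π)) e^{-(B²-A²)y/2} y^{-(Y+1)/2} ∫_0^∞ e^{-B²yh/2} h^{(Y-1)/2} (1+h)^{-Y/2} dh`,
which is absolutely continuous with respect to the Lévy density of the one-sided stable
`Y/2` subordinator. -/
theorem cgmy_levy_density_as_gaussian_mixture (Y B A : ℝ) (hY0 : 0 < Y) (hY2 : Y < 2)
    (hB : 0 < B) (x : ℝ) (hx : x ≠ 0) :
    ∫ y in Ioi (0:ℝ),
        ((B / Real.sqrt (2 * π)) * Real.exp (-((B^2 - A^2) * y / 2)) * y ^ (-((Y+1)/2)) *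
          ∫ h in Ioi (0:ℝ), Real.exp (-(B^2 * y * h / 2)) * h ^ ((Y-1)/2) * (1+h) ^ (-(Y/2))) *
        ((2 * π * y) ^ (-(1/2 : ℝ)) * Real.exp (-(x - A*y)^2 / (2*y))) =
      (2 ^ (Y/2) * Real.Gamma ((Y+1)/2) / Real.sqrt π) *
        Real.exp (A*x - B*|x|) * |x| ^ (-(1+Y)) :=
  cgmy_levy_density_as_gaussian_mixture_general (by linarith) hB A hx
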